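/- Let G be a graph, ω an end of G, and G' an induced subgraph of G with finite vertex-boundary such that some end ω' of G' contains rays of ω. Then the relative degree of ω' in G' equals the relative degree of ω in G. -/

import Mathlib

open scoped ENNReal

namespace Paper

variable {V : Type*} {W : Type*}

/-- Reachability in `G` by a walk avoiding the vertex set `S`. -/
def ReachAvoid (G : SimpleGraph V) (S : Set V) (u v : V) : Prop :=
  ∃ p : G.Walk u v, ∀ x ∈ p.support, x ∉ S

/-- A ray (one-way infinite path) in `G`. -/
structure IsRay (G : SimpleGraph V) (f : ℕ → V) : Prop where
  inj : Function.Injective f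
  adj : ∀ n, G.Adj (f n) (f (n + 1))

/-- Two rays are equivalent (belong to the same end) if no finite vertex set
separates them: for every finite `S` some vertex of the first ray can be joined
to some vertex of the second by a walk avoiding `S`. -/
def EquivRay (G : SimpleGraph V) (f g : ℕ → V) : Prop :=
  ∀ S : Set V, S.Finite → ∃ m n, ReachAvoid G S (f m) (g n)

/-- The set of ends of `G`: rays modulo equivalence. -/
def Ends (G : SimpleGraph V) :=
  Quot (fun f g : {f : ℕ → V // IsRay G f} => EquivRay G f.1 g.1)

/-- `v` dominates the ray `f`: there are infinitely many `v`–`V(f)` paths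
pairwise disjoint except in `v`. -/
def DominatesRay (G : SimpleGraph V) (v : V) (f : ℕ → V) : Prop :=
  ∃ (g : ℕ → ℕ) (p : ∀ n, G.Walk v (f (g n))),
    Function.Injective g ∧ (∀ n, (p n).IsPath) ∧
    ∀ m n, m ≠ n → ∀ x ∈ (p m).support, x ∈ (p n).support → x = v

/-- The set of vertices dominating the end of the ray `r`. -/
def Dom (G : SimpleGraph V) (r : ℕ → V) : Set V := {v | DominatesRay G v r}

/-- Vertex-boundary of the vertex set `A`. -/
def vBoundary (G : SimpleGraph V) (A : Set V) : Set V :=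
  {x | x ∈ A ∧ ∃ y, y ∉ A ∧ G.Adj x y}

/-- Edge-boundary of the vertex set `A`. -/
def eBoundary (G : SimpleGraph V) (A : Set V) : Set (Sym2 V) :=
  {e | ∃ x y, x ∈ A ∧ y ∉ A ∧ G.Adj x y ∧ e = s(x, y)}

/-- `S` is a `V'`–`Ω(A)` separator: `V' ⊄ S` and no component of `G - S`
contains both a vertex of `V'` and (the tail of) a ray lying in `A`. -/
def SepVertsEndsIn (G : SimpleGraph V) (V' S A : Set V) : Prop :=
  ¬ V' ⊆ S ∧ ∀ v ∈ V', ∀ f : ℕ → V, IsRay G f → Set.range f ⊆ A →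
    ∀ n, (∀ m, n ≤ m → f m ∉ S) → ¬ ReachAvoid G S v (f n)

/-- `S` is an inclusion-minimal `V'`–`Ω(A)` separator. -/
def MinSepVertsEndsIn (G : SimpleGraph V) (V' S A : Set V) : Prop :=
  SepVertsEndsIn G V' S A ∧ ∀ S' ⊂ S, ¬ SepVertsEndsIn G V' S' A

/-- The graph `G_ω`: `G` minus the dominating vertices of the end of `r`. -/
def Gmin (G : SimpleGraph V) (r : ℕ → V) : SimpleGraph ((Dom G r)ᶜ : Set V) :=
  G.induce ((Dom G r)ᶜ : Set V)

/-- A ray of `G_ω` belonging to (the unique end `ω̂` induced by) the end `ω` of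
the ray `r`. -/
def InDeletedEnd (G : SimpleGraph V) (r : ℕ → V)
    (f : ℕ → ((Dom G r)ᶜ : Set V)) : Prop :=
  IsRay (Gmin G r) f ∧ EquivRay G (fun n => (f n : V)) r

/-- An `ω̂`-region of `G_ω`: induced connected, finite vertex-boundary,
containing a ray of `ω̂`. -/
def IsOmegaRegion (G : SimpleGraph V) (r : ℕ → V)
    (A : Set ((Dom G r)ᶜ : Set V)) : Prop :=
  ((Gmin G r).induce A).Connected ∧ (vBoundary (Gmin G r) A).Finite ∧
    ∃ f, InDeletedEnd G r f ∧ Set.range f ⊆ A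

/-- `(Ĥ_i) → ω̂` : a sequence of distinct nested `ω̂`-regions whose
vertex-boundaries are minimal separators. -/
def Converges (G : SimpleGraph V) (r : ℕ → V)
    (A : ℕ → Set ((Dom G r)ᶜ : Set V)) : Prop :=
  Function.Injective A ∧ (∀ i, IsOmegaRegion G r (A i)) ∧
    (∀ i, A (i + 1) ⊆ A i \ vBoundary (Gmin G r) (A i)) ∧
    (∀ i, MinSepVertsEndsIn (Gmin G r) (vBoundary (Gmin G r) (A i))
      (vBoundary (Gmin G r) (A (i + 1))) (A (i + 1)))

/-- The ratio `|∂_e A| / |∂_v A|`, as an extended nonnegative real. -/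
noncomputable def bratio (G : SimpleGraph V) (A : Set V) : ℝ≥0∞ :=
  ((eBoundary G A).encard : ℝ≥0∞) / ((vBoundary G A).encard : ℝ≥0∞)

open Classical in
/-- The relative degree `d_{e/v}` of the end of the ray `r`. -/
noncomputable def relDegree (G : SimpleGraph V) (r : ℕ → V) : ℝ≥0∞ :=
  if (Dom G r).Infinite ∨ ¬ ∃ f, InDeletedEnd G r f then
    ((Dom G r).encard : ℝ≥0∞)
  else
    ((Dom G r).encard : ℝ≥0∞) +
      ⨅ A : {A : ℕ → Set ((Dom G r)ᶜ : Set V) // Converges G r A},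
        Filter.atTop.liminf fun i => bratio (Gmin G r) (A.1 i)

/-- The degree of a vertex, as an extended real. -/
noncomputable def degER (G : SimpleGraph V) (v : V) : EReal :=
  (((G.neighborSet v).encard : ℝ≥0∞) : EReal)

/-- A subdivision of `K_k` in `G` with branching vertices `b 0, …, b (k-1)`. -/
def HasTKOn (G : SimpleGraph V) {k : ℕ} (b : Fin k ↪ V) : Prop :=
  ∃ p : ∀ i j : Fin k, G.Walk (b i) (b j),
    (∀ i j, i ≠ j → (p i j).IsPath) ∧
    (∀ i j, i ≠ j → ∀ x ∈ (p i j).support, x ∈ Set.range b → x = b i ∨ x = b j) ∧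
    (∀ i j i' j', i ≠ j → i' ≠ j' → s(i, j) ≠ s(i', j') →
      ∀ x ∈ (p i j).support, x ∈ (p i' j').support → x ∈ Set.range b)

/-- `K_k` is a topological minor of `G`. -/
def HasTopK (G : SimpleGraph V) (k : ℕ) : Prop :=
  ∃ b : Fin k ↪ V, HasTKOn G b

/-- A subdivision of `K_{ℵ₀}` in `G` with branching vertices `b 0, b 1, …`. -/
def HasTKInfOn (G : SimpleGraph V) (b : ℕ ↪ V) : Prop :=
  ∃ p : ∀ i j : ℕ, G.Walk (b i) (b j),
    (∀ i j, i ≠ j → (p i j).IsPath) ∧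
    (∀ i j, i ≠ j → ∀ x ∈ (p i j).support, x ∈ Set.range b → x = b i ∨ x = b j) ∧
    (∀ i j i' j', i ≠ j → i' ≠ j' → s(i, j) ≠ s(i', j') →
      ∀ x ∈ (p i j).support, x ∈ (p i' j').support → x ∈ Set.range b)

/-- `K_k` is a minor of `G` (with finite branch sets). -/
def HasKMinor (G : SimpleGraph V) (k : ℕ) : Prop :=
  ∃ B : Fin k → Finset V,
    (∀ i, (B i).Nonempty) ∧ (∀ i j, i ≠ j → Disjoint (B i) (B j)) ∧
    (∀ i, (G.induce (B i : Set V)).Connected) ∧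
    (∀ i j, i ≠ j → ∃ x ∈ B i, ∃ y ∈ B j, G.Adj x y)

/-- The average degree of the finite induced subgraph of `G` on `s`. -/
noncomputable def avgDegOn (G : SimpleGraph V) (s : Finset V) : ℝ :=
  (∑ v ∈ s, ((G.neighborSet v ∩ ↑s).ncard : ℝ)) / s.card

/-- `G` is rayless. -/
def Rayless (G : SimpleGraph V) : Prop := ¬ ∃ f : ℕ → V, IsRay G f

/-- The average degree of the vertex set `F` into `A` in `G`. -/
noncomputable def avgDegIn (G : SimpleGraph V) (A F : Set V) : ℝ :=
  (∑ᶠ v ∈ F, ((G.neighborSet v ∩ A).ncard : ℝ)) / F.ncard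

/-! A walk that ends in a vertex set `A` and avoids `∂ᵥ A` stays in `A`. Since `∂ᵥ G'` is finite,
membership of rays in an end and domination of rays are therefore the same in `G'` and in `G`. The
regions of a convergent sequence have empty intersection, so all but finitely many of them miss
`∂ᵥ G'` and, being connected, lie inside `G'`. For regions of `G'` away from `∂ᵥ G'`, the edges and
vertices of the boundary as well as the minimal separators are the same in `G'` and in `G`, and the
limit inferior ignores finitely many terms. -/

open Filter Set

namespace ReachAvoid

variable {G : SimpleGraph V} {S T A : Set V} {u v w : V}

protected theorem refl (hu : u ∉ S) : ReachAvoid G S u u :=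
  ⟨.nil, by simpa only [SimpleGraph.Walk.support_nil, List.mem_singleton, forall_eq] using hu⟩

protected theorem cons (hu : u ∉ S) (huv : G.Adj u v) (h : ReachAvoid G S v w) :
    ReachAvoid G S u w := by
  obtain ⟨p, hp⟩ := h
  exact ⟨.cons huv p, by simpa only [SimpleGraph.Walk.support_cons, List.forall_mem_cons]
    using ⟨hu, hp⟩⟩

theorem left_notMem (h : ReachAvoid G S u v) : u ∉ S :=
  let ⟨p, hp⟩ := h
  hp u p.start_mem_support

@[elab_as_elim]
theorem head_induction_on {motive : ∀ u, ReachAvoid G S u w → Prop} (h : ReachAvoid G S u w)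
    (refl : ∀ hw : w ∉ S, motive w (.refl hw))
    (head : ∀ a b (ha : a ∉ S) (hab : G.Adj a b) (hbw : ReachAvoid G S b w),
      motive b hbw → motive a (hbw.cons ha hab)) : motive u h := by
  obtain ⟨p, hp⟩ := h
  induction p with
  | nil => exact refl (hp _ (by simp))
  | cons hab p ih =>
    have hp' := List.forall_mem_cons.1 (SimpleGraph.Walk.support_cons hab p ▸ hp)
    exact head _ _ hp'.1 hab ⟨p, hp'.2⟩ (ih refl head hp'.2)

protected theorem symm (h : ReachAvoid G S u v) : ReachAvoid G S v u :=
  let ⟨p, hp⟩ := h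
  ⟨p.reverse, by simpa only [SimpleGraph.Walk.support_reverse, List.mem_reverse] using hp⟩

theorem right_notMem (h : ReachAvoid G S u v) : v ∉ S :=
  h.symm.left_notMem

protected theorem trans (huv : ReachAvoid G S u v) (hvw : ReachAvoid G S v w) :
    ReachAvoid G S u w := by
  induction huv using head_induction_on with
  | refl => exact hvw
  | head a b ha hab _ ih => exact ih.cons ha hab

protected theorem mono (hST : S ⊆ T) (h : ReachAvoid G T u v) : ReachAvoid G S u v :=
  let ⟨p, hp⟩ := h
  ⟨p, fun x hx hxS => hp x hx (hST hxS)⟩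

/- Cut a walk ending in `A` at the last vertex where it enters `A`. -/
theorem exists_mem_insert_vBoundary (h : ReachAvoid G S u v) (hv : v ∈ A) :
    ∃ x ∈ insert u (vBoundary G A), ReachAvoid G (S ∪ Aᶜ) x v := by
  induction h using head_induction_on with
  | refl hvS => exact ⟨v, mem_insert v _, .refl (by simp [hvS, hv])⟩
  | head a b ha hab _ ih =>
    obtain ⟨x, rfl | hx, hxv⟩ := ih
    · by_cases haA : a ∈ A
      · exact ⟨a, mem_insert a _, hxv.cons (by simp [ha, haA]) hab⟩
      · have hxA : x ∈ A := not_not.1 fun hxA => hxv.left_notMem (.inr hxA)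
        exact ⟨x, .inr ⟨hxA, a, haA, hab.symm⟩, hxv⟩
    · exact ⟨x, .inr hx, hxv⟩

theorem union_compl (h : ReachAvoid G S u v) (hv : v ∈ A) (hS : vBoundary G A \ {u} ⊆ S) :
    ReachAvoid G (S ∪ Aᶜ) u v := by
  obtain ⟨x, hx, hxv⟩ := h.exists_mem_insert_vBoundary hv
  obtain rfl : x = u := by
    by_contra hxu
    exact hxv.left_notMem (.inl (hS ⟨hx.resolve_left hxu, hxu⟩))
  exact hxv

theorem left_mem (h : ReachAvoid G S u v) (hv : v ∈ A) (hS : vBoundary G A \ {u} ⊆ S) :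
    u ∈ A :=
  not_not.1 fun hu => (h.union_compl hv hS).left_notMem (.inr hu)

end ReachAvoid

section Connected

variable {G : SimpleGraph V} {A C : Set V}

theorem reachAvoid_compl_of_preconnected_induce (hC : (G.induce C).Preconnected) {u v : V}
    (hu : u ∈ C) (hv : v ∈ C) : ReachAvoid G Cᶜ u v := by
  obtain ⟨p⟩ := hC ⟨u, hu⟩ ⟨v, hv⟩
  refine ⟨p.map (SimpleGraph.Embedding.induce C).toHom, fun x hx hxC => ?_⟩
  obtain ⟨y, -, rfl⟩ := List.mem_map.1 (SimpleGraph.Walk.support_map _ p ▸ hx)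
  exact hxC y.2

theorem subset_of_disjoint_vBoundary (hC : (G.induce C).Preconnected)
    (hCA : Disjoint C (vBoundary G A)) (hne : (C ∩ A).Nonempty) : C ⊆ A := by
  obtain ⟨y, hyC, hyA⟩ := hne
  exact fun x hx => (reachAvoid_compl_of_preconnected_induce hC hx hyC).left_mem hyA
    (sdiff_subset.trans hCA.subset_compl_left)

end Connected

section Ray

variable {G : SimpleGraph V} {S A : Set V} {f g k : ℕ → V}

theorem IsRay.exists_forall_reachAvoid (hf : IsRay G f) (hS : S.Finite) :
    ∃ N, ∀ m ≥ N, ∀ n ≥ N, ReachAvoid G S (f m) (f n) := by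
  have hout : ∀ᶠ n in atTop, f n ∉ S :=
    Nat.cofinite_eq_atTop ▸ hf.inj.tendsto_cofinite hS.compl_mem_cofinite
  obtain ⟨N, hN⟩ := eventually_atTop.1 hout
  have hle : ∀ m ≥ N, ∀ n ≥ m, ReachAvoid G S (f m) (f n) := fun m hm n hmn => by
    induction n, hmn using Nat.le_induction with
    | base => exact .refl (hN m hm)
    | succ n hmn ih =>
      exact ih.trans (.cons ih.right_notMem (hf.adj n) (.refl (hN _ (by lia))))
  refine ⟨N, fun m hm n hn => ?_⟩
  rcases le_total m n with hmn | hnm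
  · exact hle m hm n hmn
  · exact (hle n hn m hnm).symm

theorem IsRay.comp_add (hf : IsRay G f) (N : ℕ) : IsRay G fun n => f (n + N) :=
  ⟨hf.inj.comp (add_left_injective N), fun n => by
    simpa only [Nat.add_right_comm] using hf.adj (n + N)⟩

theorem EquivRay.exists_ge (h : EquivRay G f g) (hS : S.Finite) (N : ℕ) :
    ∃ m ≥ N, ∃ n ≥ N, ReachAvoid G S (f m) (g n) := by
  obtain ⟨m, n, hmn⟩ := h (S ∪ (f '' Iio N ∪ g '' Iio N))
    (hS.union (((finite_Iio N).image f).union ((finite_Iio N).image g)))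
  refine ⟨m, ?_, n, ?_, hmn.mono subset_union_left⟩
  · exact not_lt.1 fun hm => hmn.left_notMem (.inr (.inl ⟨m, hm, rfl⟩))
  · exact not_lt.1 fun hn => hmn.right_notMem (.inr (.inr ⟨n, hn, rfl⟩))

protected theorem EquivRay.symm (h : EquivRay G f g) : EquivRay G g f := fun S hS =>
  let ⟨m, n, hmn⟩ := h S hS
  ⟨n, m, hmn.symm⟩

protected theorem EquivRay.trans (hg : IsRay G g) (hfg : EquivRay G f g) (hgk : EquivRay G g k) :
    EquivRay G f k := fun S hS => by
  obtain ⟨N, hN⟩ := hg.exists_forall_reachAvoid hS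
  obtain ⟨a, -, b, hb, hab⟩ := hfg.exists_ge hS N
  obtain ⟨c, hc, d, -, hcd⟩ := hgk.exists_ge hS N
  exact ⟨a, d, (hab.trans (hN b hb c hc)).trans hcd⟩

theorem EquivRay.comp_add (h : EquivRay G f g) (N : ℕ) :
    EquivRay G (fun n => f (n + N)) g := fun S hS => by
  obtain ⟨m, hm, n, -, hmn⟩ := h.exists_ge hS N
  exact ⟨m - N, n, by simpa only [Nat.sub_add_cancel hm] using hmn⟩

theorem EquivRay.eventually_mem (hA : (vBoundary G A).Finite) (hg : IsRay G g)
    (h : EquivRay G g f) (hf : ∀ n, f n ∈ A) : ∀ᶠ n in atTop, g n ∈ A := by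
  obtain ⟨N, hN⟩ := hg.exists_forall_reachAvoid hA
  obtain ⟨m, hm, n, -, hmn⟩ := h.exists_ge hA N
  filter_upwards [eventually_ge_atTop N] with i hi
  exact ((hN i hi m hm).trans hmn).left_mem (hf n) sdiff_subset

end Ray

section Domination

variable {G : SimpleGraph V} {S A : Set V} {f g : ℕ → V} {v : V}

theorem DominatesRay.frequently_reachAvoid (h : DominatesRay G v f) (hS : S.Finite)
    (hv : v ∉ S) : ∃ᶠ n in atTop, ReachAvoid G S v (f n) := by
  obtain ⟨g, p, hg, -, hp⟩ := h
  have havoid : ∀ᶠ k in atTop, ∀ x ∈ S, x ∉ (p k).support := by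
    refine (eventually_all_finite hS).2 fun x hx => ?_
    have hsub : {k | x ∈ (p k).support}.Subsingleton := fun i hi j hj => by
      by_contra hij
      exact hv (hp i j hij x hi hj ▸ hx)
    exact Nat.cofinite_eq_atTop ▸ hsub.finite.compl_mem_cofinite
  exact hg.nat_tendsto_atTop.frequently
    (havoid.mono fun k hk => ⟨p k, fun x hx hxS => hk x hxS hx⟩).frequently

/- The disjoint paths are chosen greedily, each avoiding its predecessors except in `v`. -/
theorem dominatesRay_of_frequently_reachAvoid
    (h : ∀ S : Set V, S.Finite → v ∉ S → ∃ᶠ n in atTop, ReachAvoid G S v (f n)) :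
    DominatesRay G v f := by
  classical
  let Compatible (a b : Σ n, G.Path v (f n)) : Prop :=
    a.1 ≠ b.1 ∧ ∀ x ∈ a.2.1.support, x ∈ b.2.1.support → x = v
  have : Std.Symm Compatible := ⟨fun a b hab => ⟨hab.1.symm, fun x hb ha => hab.2 x ha hb⟩⟩
  obtain ⟨s, -, hs⟩ := exists_seq_of_forall_finset_exists' (fun _ => True) Compatible
    fun t _ => by
      obtain ⟨n, ⟨p, hp⟩, hn⟩ := ((h ((⋃ a ∈ t, {x | x ∈ a.2.1.support}) \ {v})
        (t.finite_toSet.biUnion fun a _ => a.2.1.support.finite_toSet).sdiff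
        (by simp)).and_eventually (eventually_gt_atTop (t.sup Sigma.fst))).exists
      refine ⟨⟨n, p.toPath⟩, trivial, fun a ha =>
        ⟨((Finset.le_sup (f := Sigma.fst) ha).trans_lt hn).ne, fun x hxa hxp => ?_⟩⟩
      by_contra hxv
      exact hp x (p.support_bypass_subset_support hxp) ⟨mem_biUnion ha hxa, hxv⟩
  exact ⟨fun n => (s n).1, fun n => (s n).2.1,
    fun m n hmn => by_contra fun hne => (hs hne).1 hmn,
    fun n => (s n).2.2, fun m n hmn => (hs hmn).2⟩

theorem DominatesRay.congr (hf : IsRay G f) (hfg : EquivRay G f g) (h : DominatesRay G v f) :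
    DominatesRay G v g := by
  refine dominatesRay_of_frequently_reachAvoid fun S hS hv => frequently_atTop.2 fun M => ?_
  obtain ⟨N, hN⟩ := hf.exists_forall_reachAvoid hS
  obtain ⟨n, hn, hvn⟩ := frequently_atTop.1 (h.frequently_reachAvoid hS hv) N
  obtain ⟨a, ha, b, hb, hab⟩ := hfg.exists_ge hS (max N M)
  exact ⟨b, le_of_max_le_right hb,
    (hvn.trans (hN n hn a (le_of_max_le_left ha))).trans hab⟩

theorem dom_congr (hf : IsRay G f) (hg : IsRay G g) (hfg : EquivRay G f g) :
    Dom G f = Dom G g :=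
  Subset.antisymm (fun _ => DominatesRay.congr hf hfg) fun _ => DominatesRay.congr hg hfg.symm

theorem DominatesRay.mem (h : DominatesRay G v f) (hA : (vBoundary G A).Finite)
    (hf : ∀ n, f n ∈ A) : v ∈ A := by
  obtain ⟨n, hn⟩ := (h.frequently_reachAvoid (hA.sdiff (t := {v})) (by simp)).exists
  exact hn.left_mem (hf n) subset_rfl

end Domination

section Embedding

variable {G : SimpleGraph V} {G' : SimpleGraph W} (φ : G' ↪g G) {S : Set W} {u v : W}
  {f g : ℕ → W}

theorem ReachAvoid.map {S : Set V} (h : ReachAvoid G' (φ ⁻¹' S) u v) :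
    ReachAvoid G S (φ u) (φ v) := by
  induction h using ReachAvoid.head_induction_on with
  | refl hv => exact .refl hv
  | head a b ha hab _ ih => exact ih.cons ha (φ.map_adj_iff.2 hab)

theorem ReachAvoid.comap (h : ReachAvoid G (φ '' S ∪ (range φ)ᶜ) (φ u) (φ v)) :
    ReachAvoid G' S u v := by
  have hlift : ∀ a, φ a ∉ φ '' S ∪ (range φ)ᶜ → a ∉ S := fun a ha haS =>
    ha (.inl (mem_image_of_mem φ haS))
  generalize hx : φ u = x at h
  induction h using ReachAvoid.head_induction_on generalizing u with
  | refl hv =>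
    obtain rfl := φ.injective hx
    exact .refl (hlift u hv)
  | head x y hxS hxy hyv ih =>
    subst hx
    obtain ⟨b, rfl⟩ : y ∈ range φ := not_not.1 fun hy => hyv.left_notMem (.inr hy)
    exact (ih rfl).cons (hlift u hxS) (φ.map_adj_iff.1 hxy)

theorem ReachAvoid.comap_of_vBoundary
    (h : ReachAvoid G (φ '' S ∪ vBoundary G (range φ) \ {φ u}) (φ u) (φ v)) :
    ReachAvoid G' S u v :=
  .comap φ <| (h.union_compl (mem_range_self v) subset_union_right).mono
    (union_subset_union_left _ subset_union_left)

theorem isRay_comp_iff : IsRay G (φ ∘ f) ↔ IsRay G' f :=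
  ⟨fun h => ⟨h.inj.of_comp, fun n => φ.map_adj_iff.1 (h.adj n)⟩,
    fun h => ⟨φ.injective.comp h.inj, fun n => φ.map_adj_iff.2 (h.adj n)⟩⟩

theorem equivRay_comp_iff (hφ : (vBoundary G (range φ)).Finite) :
    EquivRay G (φ ∘ f) (φ ∘ g) ↔ EquivRay G' f g := by
  refine ⟨fun h S hS => ?_, fun h S hS => ?_⟩
  · obtain ⟨m, n, hmn⟩ := h (φ '' S ∪ vBoundary G (range φ)) ((hS.image φ).union hφ)
    exact ⟨m, n, .comap_of_vBoundary φ (hmn.mono (union_subset_union_right _ sdiff_subset))⟩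
  · obtain ⟨m, n, hmn⟩ := h (φ ⁻¹' S) (hS.preimage φ.injective.injOn)
    exact ⟨m, n, hmn.map φ⟩

theorem dominatesRay_comp_iff (hφ : (vBoundary G (range φ)).Finite) :
    DominatesRay G (φ v) (φ ∘ f) ↔ DominatesRay G' v f := by
  refine ⟨fun h => dominatesRay_of_frequently_reachAvoid fun S hS hv => ?_,
    fun h => dominatesRay_of_frequently_reachAvoid fun S hS hv => ?_⟩
  · refine (h.frequently_reachAvoid (S := φ '' S ∪ vBoundary G (range φ) \ {φ v})
      ((hS.image φ).union hφ.sdiff) ?_).mono fun n => .comap_of_vBoundary φ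
    simp [hv]
  · exact (h.frequently_reachAvoid (hS.preimage φ.injective.injOn) hv).mono
      fun n hn => hn.map φ

theorem dom_comp (hφ : (vBoundary G (range φ)).Finite) :
    Dom G (φ ∘ f) = φ '' Dom G' f := by
  ext v
  constructor
  · intro hv
    obtain ⟨w, rfl⟩ := DominatesRay.mem hv hφ fun n => mem_range_self (f n)
    exact ⟨w, (dominatesRay_comp_iff φ hφ).1 hv, rfl⟩
  · rintro ⟨w, hw, rfl⟩
    exact (dominatesRay_comp_iff φ hφ).2 hw

end Embedding

section Region

variable {H : SimpleGraph V} {E : (ℕ → V) → Prop} {A : ℕ → Set V}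

/-- The regions `A i` of `H` converge to an end, in the sense of `Converges`, where the rays of
the end are given by an arbitrary predicate `E`. -/
structure ConvergesTo (H : SimpleGraph V) (E : (ℕ → V) → Prop) (A : ℕ → Set V) : Prop where
  injective : Function.Injective A
  connected : ∀ i, (H.induce (A i)).Connected
  finite_vBoundary : ∀ i, (vBoundary H (A i)).Finite
  exists_ray : ∀ i, ∃ f, E f ∧ range f ⊆ A i
  succ_subset : ∀ i, A (i + 1) ⊆ A i \ vBoundary H (A i)
  minSep : ∀ i, MinSepVertsEndsIn H (vBoundary H (A i)) (vBoundary H (A (i + 1))) (A (i + 1))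

/-- The infimum of `liminf |∂ₑ Aᵢ| / |∂ᵥ Aᵢ|` over all sequences of regions of `H` converging to
the end whose rays are given by `E`. -/
noncomputable def infBoundaryRatio (H : SimpleGraph V) (E : (ℕ → V) → Prop) : ℝ≥0∞ :=
  ⨅ (A : ℕ → Set V) (_ : ConvergesTo H E A), liminf (fun i => bratio H (A i)) atTop

theorem converges_iff_convergesTo {r : ℕ → V} {A : ℕ → Set ((Dom H r)ᶜ : Set V)} :
    Converges H r A ↔ ConvergesTo (Gmin H r) (InDeletedEnd H r) A :=
  ⟨fun ⟨hinj, hreg, hsucc, hsep⟩ => ⟨hinj, fun i => (hreg i).1, fun i => (hreg i).2.1,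
      fun i => (hreg i).2.2, hsucc, hsep⟩,
    fun h => ⟨h.injective, fun i => ⟨h.connected i, h.finite_vBoundary i, h.exists_ray i⟩,
      h.succ_subset, h.minSep⟩⟩

open Classical in
theorem relDegree_eq_ite (r : ℕ → V) :
    relDegree H r = if (Dom H r).Infinite ∨ ¬ ∃ f, InDeletedEnd H r f then
      ((Dom H r).encard : ℝ≥0∞)
    else (Dom H r).encard + infBoundaryRatio (Gmin H r) (InDeletedEnd H r) := by
  simp only [relDegree, infBoundaryRatio, iInf_subtype, converges_iff_convergesTo]

namespace ConvergesTo

theorem comp_add (h : ConvergesTo H E A) (k : ℕ) : ConvergesTo H E fun i => A (i + k) where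
  injective := h.injective.comp (add_left_injective k)
  connected i := h.connected _
  finite_vBoundary i := h.finite_vBoundary _
  exists_ray i := h.exists_ray _
  succ_subset i := by simpa only [Nat.add_right_comm] using h.succ_subset (i + k)
  minSep i := by simpa only [Nat.add_right_comm] using h.minSep (i + k)

theorem antitone (h : ConvergesTo H E A) : Antitone A :=
  antitone_nat_of_succ_le fun i => (h.succ_subset i).trans sdiff_subset

/- The intersection has empty vertex-boundary, so the connected set `A 0` would be contained in it,
and hence in `A 1`. -/
theorem iInter_eq_empty (h : ConvergesTo H E A) : ⋂ i, A i = ∅ := by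
  by_contra! hne
  have hbd : vBoundary H (⋂ i, A i) = ∅ := by
    refine eq_empty_of_forall_notMem fun x ⟨hx, y, hy, hxy⟩ => ?_
    obtain ⟨i, hi⟩ := not_forall.1 (mt mem_iInter.2 hy)
    exact (h.succ_subset i (mem_iInter.1 hx _)).2 ⟨mem_iInter.1 hx i, y, hi, hxy⟩
  have hsub : A 0 ⊆ ⋂ i, A i :=
    subset_of_disjoint_vBoundary (h.connected 0).preconnected (hbd ▸ disjoint_empty _)
      (by rwa [inter_eq_right.2 (iInter_subset A 0)])
  obtain ⟨y, hy, -⟩ := not_subset.1 (h.minSep 0).1.1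
  exact (h.succ_subset 0 (mem_iInter.1 (hsub hy.1) 1)).2 hy

theorem eventually_disjoint (h : ConvergesTo H E A) {B : Set V} (hB : B.Finite) :
    ∀ᶠ i in atTop, Disjoint (A i) B := by
  simp only [disjoint_right]
  refine (eventually_all_finite hB).2 fun x _ => ?_
  have hx : x ∉ ⋂ i, A i := h.iInter_eq_empty ▸ notMem_empty x
  obtain ⟨i, hi⟩ := not_forall.1 (mt mem_iInter.2 hx)
  filter_upwards [eventually_ge_atTop i] with j hij hxj using hi (h.antitone hij hxj)

end ConvergesTo

end Region

section Image

variable {H : SimpleGraph V} {H' : SimpleGraph W} (φ : H' ↪g H) {S A₀ A₁ : Set W}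

theorem mem_of_adj_of_notMem_vBoundary {A : Set V} {x y : V} (hx : x ∈ A)
    (hxA : x ∉ vBoundary H A) (hxy : H.Adj x y) : y ∈ A :=
  by_contra fun hy => hxA ⟨hx, y, hy, hxy⟩

theorem vBoundary_preimage_subset (A : Set V) : vBoundary H' (φ ⁻¹' A) ⊆ φ ⁻¹' vBoundary H A :=
  fun _ ⟨hx, y, hy, hxy⟩ => ⟨hx, φ y, hy, φ.map_adj_iff.2 hxy⟩

theorem exists_eq_of_adj_of_mem_image (hS : Disjoint (φ '' S) (vBoundary H (range φ))) {x : W}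
    (hx : x ∈ S) {y : V} (hxy : H.Adj (φ x) y) : ∃ z, H'.Adj x z ∧ φ z = y := by
  obtain ⟨z, rfl⟩ := mem_of_adj_of_notMem_vBoundary (mem_range_self x)
    (disjoint_left.1 hS (mem_image_of_mem φ hx)) hxy
  exact ⟨z, φ.map_adj_iff.1 hxy, rfl⟩

theorem vBoundary_image (hS : Disjoint (φ '' S) (vBoundary H (range φ))) :
    vBoundary H (φ '' S) = φ '' vBoundary H' S := by
  ext x
  constructor
  · rintro ⟨⟨x, hx, rfl⟩, y, hy, hxy⟩
    obtain ⟨z, hxz, rfl⟩ := exists_eq_of_adj_of_mem_image φ hS hx hxy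
    exact ⟨x, ⟨hx, z, fun hz => hy (mem_image_of_mem φ hz), hxz⟩, rfl⟩
  · rintro ⟨x, ⟨hx, y, hy, hxy⟩, rfl⟩
    exact ⟨mem_image_of_mem φ hx, φ y, mt φ.injective.mem_set_image.1 hy, φ.map_adj_iff.2 hxy⟩

theorem eBoundary_image (hS : Disjoint (φ '' S) (vBoundary H (range φ))) :
    eBoundary H (φ '' S) = Sym2.map φ '' eBoundary H' S := by
  ext e
  constructor
  · rintro ⟨_, y, ⟨x, hx, rfl⟩, hy, hxy, rfl⟩
    obtain ⟨z, hxz, rfl⟩ := exists_eq_of_adj_of_mem_image φ hS hx hxy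
    exact ⟨s(x, z), ⟨x, z, hx, fun hz => hy (mem_image_of_mem φ hz), hxz, rfl⟩, rfl⟩
  · rintro ⟨_, ⟨x, y, hx, hy, hxy, rfl⟩, rfl⟩
    exact ⟨φ x, φ y, mem_image_of_mem φ hx, mt φ.injective.mem_set_image.1 hy,
      φ.map_adj_iff.2 hxy, rfl⟩

theorem bratio_image (hS : Disjoint (φ '' S) (vBoundary H (range φ))) :
    bratio H (φ '' S) = bratio H' S := by
  rw [bratio, bratio, vBoundary_image φ hS, eBoundary_image φ hS, φ.injective.encard_image,
    (Sym2.map.injective φ.injective).encard_image]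

theorem connected_induce_image_iff :
    (H.induce (φ '' S)).Connected ↔ (H'.induce S).Connected :=
  let e : H'.induce S ≃g H.induce (φ '' S) := ⟨Equiv.Set.image φ S φ.injective, φ.map_adj_iff⟩
  e.connected_iff.symm

theorem range_subset_image_iff {f : ℕ → V} :
    range f ⊆ φ '' S ↔ ∃ g, φ ∘ g = f ∧ range g ⊆ S := by
  constructor
  · intro hf
    choose g hg hgf using fun n => hf (mem_range_self n)
    exact ⟨g, funext hgf, range_subset_iff.2 hg⟩
  · rintro ⟨g, rfl, hg⟩
    rw [range_comp]
    exact image_mono hg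

/- A walk of `H` starting in `∂ᵥ A₀` may leave the image of `H'`, but its part after its last entry
into `A₀` again starts in `∂ᵥ A₀` and lifts to `H'`. -/
theorem sepVertsEndsIn_image_iff (h₀ : Disjoint (φ '' A₀) (vBoundary H (range φ)))
    (h₁₀ : A₁ ⊆ A₀) :
    SepVertsEndsIn H (vBoundary H (φ '' A₀)) (φ '' S) (φ '' A₁) ↔
      SepVertsEndsIn H' (vBoundary H' A₀) S A₁ := by
  unfold SepVertsEndsIn
  rw [vBoundary_image φ h₀, image_subset_image_iff φ.injective]
  refine and_congr_right fun _ => ⟨fun h v hv f hf hfA n hn hvf => ?_,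
    fun h v hv f hf hfA n hn hvf => ?_⟩
  · refine h (φ v) (mem_image_of_mem φ hv) (φ ∘ f) ((isRay_comp_iff φ).2 hf)
      ((range_subset_image_iff φ).2 ⟨f, rfl, hfA⟩) n
      (fun m hm => mt φ.injective.mem_set_image.1 (hn m hm)) (.map φ ?_)
    rwa [preimage_image_eq S φ.injective]
  · obtain ⟨g, rfl, hgA⟩ := (range_subset_image_iff φ).1 hfA
    obtain ⟨x, hx, hxg⟩ := hvf.exists_mem_insert_vBoundary (A := φ '' A₀)
      (mem_image_of_mem φ (h₁₀ (hgA (mem_range_self n))))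
    rw [vBoundary_image φ h₀, insert_eq_of_mem hv] at hx
    obtain ⟨w, hw, rfl⟩ := hx
    exact h w hw g ((isRay_comp_iff φ).1 hf) hgA n
      (fun m hm hmS => hn m hm (mem_image_of_mem φ hmS))
      (.comap φ (hxg.mono (union_subset_union_right _
        (compl_subset_compl.2 (image_subset_range φ A₀)))))

theorem minSepVertsEndsIn_image_iff (h₀ : Disjoint (φ '' A₀) (vBoundary H (range φ)))
    (h₁₀ : A₁ ⊆ A₀) :
    MinSepVertsEndsIn H (vBoundary H (φ '' A₀)) (φ '' S) (φ '' A₁) ↔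
      MinSepVertsEndsIn H' (vBoundary H' A₀) S A₁ := by
  unfold MinSepVertsEndsIn
  rw [sepVertsEndsIn_image_iff φ h₀ h₁₀]
  refine and_congr_right fun _ => ⟨fun h T hT => ?_, fun h T hT => ?_⟩
  · exact mt (sepVertsEndsIn_image_iff φ h₀ h₁₀).2
      (h _ (φ.injective.image_strictMono hT))
  · obtain ⟨T, -, rfl⟩ := subset_image_iff.1 hT.subset
    exact mt (sepVertsEndsIn_image_iff φ h₀ h₁₀).1
      (h T ((φ.injective.injOn.image_ssubset_image_iff (subset_univ T) (subset_univ S)).1 hT))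

variable {E : (ℕ → V) → Prop}

theorem ConvergesTo.infBoundaryRatio_le {A : ℕ → Set V} (h : ConvergesTo H E A) :
    infBoundaryRatio H E ≤ liminf (fun i => bratio H (A i)) atTop :=
  iInf₂_le A h

theorem convergesTo_image_iff {A : ℕ → Set W}
    (hA : ∀ i, Disjoint (φ '' A i) (vBoundary H (range φ))) :
    ConvergesTo H E (fun i => φ '' A i) ↔ ConvergesTo H' (fun g => E (φ ∘ g)) A := by
  have hbd : ∀ i, vBoundary H (φ '' A i) = φ '' vBoundary H' (A i) := fun i =>
    vBoundary_image φ (hA i)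
  have hfin : ∀ i, (vBoundary H (φ '' A i)).Finite ↔ (vBoundary H' (A i)).Finite := fun i => by
    rw [hbd, finite_image_iff φ.injective.injOn]
  have hray : ∀ i, (∃ f, E f ∧ range f ⊆ φ '' A i) ↔ ∃ g, E (φ ∘ g) ∧ range g ⊆ A i := fun i => by
    simp only [range_subset_image_iff φ]
    exact ⟨fun ⟨_, hf, g, hgf, hg⟩ => ⟨g, hgf ▸ hf, hg⟩, fun ⟨g, hg, hgA⟩ => ⟨_, hg, g, rfl, hgA⟩⟩
  have hsucc : ∀ i, φ '' A (i + 1) ⊆ φ '' A i \ vBoundary H (φ '' A i) ↔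
      A (i + 1) ⊆ A i \ vBoundary H' (A i) := fun i => by
    rw [hbd, ← image_sdiff φ.injective, image_subset_image_iff φ.injective]
  have hsep : ∀ i, A (i + 1) ⊆ A i \ vBoundary H' (A i) →
      (MinSepVertsEndsIn H (vBoundary H (φ '' A i)) (vBoundary H (φ '' A (i + 1)))
        (φ '' A (i + 1)) ↔
      MinSepVertsEndsIn H' (vBoundary H' (A i)) (vBoundary H' (A (i + 1))) (A (i + 1))) :=
    fun i hi => by
      rw [hbd (i + 1), minSepVertsEndsIn_image_iff φ (hA i) (hi.trans sdiff_subset)]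
  constructor
  · exact fun h => ⟨fun i j hij => h.injective (congrArg (image φ) hij),
      fun i => (connected_induce_image_iff φ).1 (h.connected i),
      fun i => (hfin i).1 (h.finite_vBoundary i), fun i => (hray i).1 (h.exists_ray i),
      fun i => (hsucc i).1 (h.succ_subset i),
      fun i => (hsep i ((hsucc i).1 (h.succ_subset i))).1 (h.minSep i)⟩
  · exact fun h => ⟨φ.injective.image_injective.comp h.injective,
      fun i => (connected_induce_image_iff φ).2 (h.connected i),
      fun i => (hfin i).2 (h.finite_vBoundary i), fun i => (hray i).2 (h.exists_ray i),
      fun i => (hsucc i).2 (h.succ_subset i), fun i => (hsep i (h.succ_subset i)).2 (h.minSep i)⟩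

theorem ConvergesTo.exists_image (hφ : (vBoundary H (range φ)).Finite) {A : ℕ → Set W}
    (h : ConvergesTo H' (fun g => E (φ ∘ g)) A) :
    ∃ k, ConvergesTo H E (fun i => φ '' A (i + k)) ∧
      ∀ i, bratio H (φ '' A (i + k)) = bratio H' (A (i + k)) := by
  obtain ⟨k, hk⟩ := eventually_atTop.1
    (h.eventually_disjoint (hφ.preimage φ.injective.injOn))
  have hdisj : ∀ i, Disjoint (φ '' A (i + k)) (vBoundary H (range φ)) := fun i =>
    disjoint_image_left.2 (hk _ (Nat.le_add_left k i))
  exact ⟨k, (convergesTo_image_iff φ hdisj).2 (h.comp_add k), fun i => bratio_image φ (hdisj i)⟩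

theorem ConvergesTo.exists_preimage (hφ : (vBoundary H (range φ)).Finite)
    (hE : ∀ g, E g → ∃ n, g n ∈ range φ) {A : ℕ → Set V} (h : ConvergesTo H E A) :
    ∃ k, ConvergesTo H' (fun g => E (φ ∘ g)) (fun i => φ ⁻¹' A (i + k)) ∧
      ∀ i, bratio H' (φ ⁻¹' A (i + k)) = bratio H (A (i + k)) := by
  obtain ⟨k, hk⟩ := eventually_atTop.1 (h.eventually_disjoint hφ)
  have hdisj : ∀ i, Disjoint (A (i + k)) (vBoundary H (range φ)) := fun i =>
    hk _ (Nat.le_add_left k i)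
  have himage : ∀ i, φ '' (φ ⁻¹' A (i + k)) = A (i + k) := fun i => by
    obtain ⟨g, hg, hgA⟩ := h.exists_ray (i + k)
    obtain ⟨n, hn⟩ := hE g hg
    exact image_preimage_eq_of_subset (subset_of_disjoint_vBoundary
      (h.connected _).preconnected (hdisj i) ⟨g n, hgA (mem_range_self n), hn⟩)
  refine ⟨k, (convergesTo_image_iff φ ?_).1 ?_, fun i => ?_⟩
  · simpa only [himage] using hdisj
  · simpa only [himage] using h.comp_add k
  · rw [← bratio_image φ (by rw [himage]; exact hdisj i), himage]

theorem infBoundaryRatio_comp (hφ : (vBoundary H (range φ)).Finite)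
    (hE : ∀ g, E g → ∃ n, g n ∈ range φ) :
    infBoundaryRatio H' (fun g => E (φ ∘ g)) = infBoundaryRatio H E := by
  refine le_antisymm (le_iInf₂ fun A hA => ?_) (le_iInf₂ fun A hA => ?_)
  · obtain ⟨k, hconv, hratio⟩ := hA.exists_preimage φ hφ hE
    calc infBoundaryRatio H' (fun g => E (φ ∘ g))
        ≤ liminf (fun i => bratio H' (φ ⁻¹' A (i + k))) atTop := hconv.infBoundaryRatio_le
      _ = liminf (fun i => bratio H (A (i + k))) atTop := by simp only [hratio]
      _ = liminf (fun i => bratio H (A i)) atTop :=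
        liminf_nat_add (fun i => bratio H (A i)) k
  · obtain ⟨k, hconv, hratio⟩ := hA.exists_image φ hφ
    calc infBoundaryRatio H E
        ≤ liminf (fun i => bratio H (φ '' A (i + k))) atTop := hconv.infBoundaryRatio_le
      _ = liminf (fun i => bratio H' (A (i + k))) atTop := by simp only [hratio]
      _ = liminf (fun i => bratio H' (A i)) atTop :=
        liminf_nat_add (fun i => bratio H' (A i)) k

end Image

section DeletedEnd

variable {G : SimpleGraph V} {G' : SimpleGraph W} {r : ℕ → V} {f : ℕ → W} (φ : G' ↪g G)
  (hD : φ ⁻¹' Dom G r = Dom G' f)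

/-- The embedding of `G'` minus the vertices dominating `f` into `G` minus those dominating `r`
induced by an embedding `φ` under which the two sets of dominating vertices correspond. -/
def gminEmbedding : Gmin G' f ↪g Gmin G r where
  toFun x := ⟨φ x, fun hx => x.2 (hD.subset hx)⟩
  inj' _ _ hxy := Subtype.ext (φ.injective (congrArg Subtype.val hxy))
  map_rel_iff' := φ.map_adj_iff

theorem range_gminEmbedding : range (gminEmbedding φ hD) = Subtype.val ⁻¹' range φ := by
  ext x
  constructor
  · rintro ⟨y, rfl⟩
    exact mem_range_self y.1
  · rintro ⟨w, hw⟩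
    exact ⟨⟨w, fun hwD => x.2 (hw ▸ hD.superset hwD)⟩, Subtype.ext hw⟩

theorem finite_vBoundary_range_gminEmbedding (hφ : (vBoundary G (range φ)).Finite) :
    (vBoundary (Gmin G r) (range (gminEmbedding φ hD))).Finite := by
  rw [range_gminEmbedding]
  exact (hφ.preimage Subtype.val_injective.injOn).subset
    (vBoundary_preimage_subset (SimpleGraph.Embedding.induce _) (range φ))

theorem inDeletedEnd_gminEmbedding_comp_iff (hφ : (vBoundary G (range φ)).Finite) (hr : IsRay G r)
    (hfr : EquivRay G (φ ∘ f) r) (hf : IsRay G' f) {g : ℕ → ((Dom G' f)ᶜ : Set W)} :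
    InDeletedEnd G r (gminEmbedding φ hD ∘ g) ↔ InDeletedEnd G' f g := by
  refine and_congr (isRay_comp_iff _) ?_
  rw [← equivRay_comp_iff φ hφ]
  exact ⟨fun h => h.trans hr hfr.symm, fun h => h.trans ((isRay_comp_iff φ).2 hf) hfr⟩

theorem InDeletedEnd.eventually_mem_range (hφ : (vBoundary G (range φ)).Finite) (hr : IsRay G r)
    (hfr : EquivRay G (φ ∘ f) r) {g : ℕ → ((Dom G r)ᶜ : Set V)} (hg : InDeletedEnd G r g) :
    ∀ᶠ n in atTop, g n ∈ range (gminEmbedding φ hD) := by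
  rw [range_gminEmbedding]
  have hgG : IsRay G fun n => (g n : V) := (isRay_comp_iff (SimpleGraph.Embedding.induce _)).2 hg.1
  have hgf : EquivRay G (fun n => (g n : V)) (φ ∘ f) := hg.2.trans hr hfr.symm
  have hmem : ∀ᶠ n in atTop, (g n : V) ∈ range φ :=
    hgf.eventually_mem hφ hgG fun n => mem_range_self (f n)
  exact hmem

theorem dom_eq_image (hφ : (vBoundary G (range φ)).Finite) (hr : IsRay G r)
    (hfr : EquivRay G (φ ∘ f) r) (hf : IsRay G' f) : Dom G r = φ '' Dom G' f := by
  rw [← dom_comp φ hφ, dom_congr ((isRay_comp_iff φ).2 hf) hr hfr]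

theorem preimage_dom_eq (hφ : (vBoundary G (range φ)).Finite) (hr : IsRay G r)
    (hfr : EquivRay G (φ ∘ f) r) (hf : IsRay G' f) : φ ⁻¹' Dom G r = Dom G' f := by
  rw [dom_eq_image φ hφ hr hfr hf, preimage_image_eq _ φ.injective]

theorem exists_inDeletedEnd_iff (hφ : (vBoundary G (range φ)).Finite) (hr : IsRay G r)
    (hfr : EquivRay G (φ ∘ f) r) (hf : IsRay G' f) :
    (∃ g, InDeletedEnd G' f g) ↔ ∃ g, InDeletedEnd G r g := by
  have hD := preimage_dom_eq φ hφ hr hfr hf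
  constructor
  · rintro ⟨g, hg⟩
    exact ⟨_, (inDeletedEnd_gminEmbedding_comp_iff φ hD hφ hr hfr hf).2 hg⟩
  · rintro ⟨g, hg⟩
    obtain ⟨N, hN⟩ := eventually_atTop.1 (hg.eventually_mem_range φ hD hφ hr hfr)
    choose g' hg' using fun n => hN (n + N) (Nat.le_add_left N n)
    refine ⟨g', (inDeletedEnd_gminEmbedding_comp_iff φ hD hφ hr hfr hf).1 ?_⟩
    rw [show gminEmbedding φ hD ∘ g' = fun n => g (n + N) from funext hg']
    exact ⟨hg.1.comp_add N, hg.2.comp_add N⟩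

theorem infBoundaryRatio_gmin_eq (hφ : (vBoundary G (range φ)).Finite) (hr : IsRay G r)
    (hfr : EquivRay G (φ ∘ f) r) (hf : IsRay G' f) :
    infBoundaryRatio (Gmin G' f) (InDeletedEnd G' f) =
      infBoundaryRatio (Gmin G r) (InDeletedEnd G r) := by
  have hD := preimage_dom_eq φ hφ hr hfr hf
  have hE : (fun g => InDeletedEnd G r (gminEmbedding φ hD ∘ g)) = InDeletedEnd G' f :=
    funext fun _ => propext (inDeletedEnd_gminEmbedding_comp_iff φ hD hφ hr hfr hf)
  rw [← hE, infBoundaryRatio_comp _ (finite_vBoundary_range_gminEmbedding φ hD hφ)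
    fun _ hg => (hg.eventually_mem_range φ hD hφ hr hfr).exists]

end DeletedEnd

theorem relDegree_eq_of_finite_boundary_general {G : SimpleGraph V} {G' : SimpleGraph W}
    (φ : G' ↪g G) (hφ : (vBoundary G (range φ)).Finite) {r : ℕ → V} (hr : IsRay G r) {f : ℕ → W}
    (hfr : EquivRay G (φ ∘ f) r) (hf : IsRay G' f) : relDegree G' f = relDegree G r := by
  have hD : Dom G r = φ '' Dom G' f := dom_eq_image φ hφ hr hfr hf
  have hfin : (Dom G r).Infinite ↔ (Dom G' f).Infinite := by
    rw [hD, infinite_image_iff φ.injective.injOn]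
  have hcard : (Dom G r).encard = (Dom G' f).encard := by rw [hD, φ.injective.encard_image]
  rw [relDegree_eq_ite, relDegree_eq_ite, hfin, hcard, exists_inDeletedEnd_iff φ hφ hr hfr hf,
    infBoundaryRatio_gmin_eq φ hφ hr hfr hf]

/-- if `G'` is an induced subgraph of `G` (on the vertex set `A`)
with finite vertex-boundary and the end of the ray `f` of `G'` contains rays of
the end of `r`, then the relative degrees of the two ends agree. -/
theorem relDegree_eq_of_finite_boundary (G : SimpleGraph V) (r : ℕ → V)
    (hr : IsRay G r) (A : Set V) (hb : (vBoundary G A).Finite)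
    (f : ℕ → A) (hf : IsRay (G.induce A) f)
    (hequiv : EquivRay G (fun n => (f n : V)) r) :
    relDegree (G.induce A) f = relDegree G r := by
  refine relDegree_eq_of_finite_boundary_general (SimpleGraph.Embedding.induce A) ?_ hr hequiv hf
  change (vBoundary G (range (Subtype.val : A → V))).Finite
  rwa [Subtype.range_val]

end Paper
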